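/- Let f : ℝ² → ℝ be of class C² satisfying (i) D²f(p)(q,q) > 0 for all p, q ∈ ℝ² with q ≠ 0, and (ii) there is a constant Λ > 0 with |D²f(p)| ≤ Λ/(1+|p|) for all p ∈ ℝ². Let u ∈ C²(ℝ²) solve div[Df(∇u)] = 0 on ℝ², and suppose there is K > 0 with |∂₁u(x)| · ln²(1+|∂₁u(x)|) ≤ K(|∂₂u(x)| + 1) for all x ∈ ℝ². Then ∫_{ℝ²} D²f(∇u)(∇∂₁u, ∇∂₁u) · (1+|∂₁u|²)^{−1/2} dx < ∞. -/

import Mathlib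

open Real MeasureTheory Metric
open scoped ENNReal

noncomputable section

/-- `ℝ²` with its Euclidean structure. -/
abbrev E2 : Type := EuclideanSpace ℝ (Fin 2)

/-- The `i`-th standard basis vector of `ℝ²`. -/
def ee (i : Fin 2) : E2 := EuclideanSpace.single i 1

/-- The Hessian bilinear form `D²f(p)(q,q)`. -/
def Hess (f : E2 → ℝ) (p q : E2) : ℝ := iteratedFDeriv ℝ 2 f p ![q, q]

/-- The partial derivative `∂ᵢu(x)`. -/
def pd (u : E2 → ℝ) (i : Fin 2) (x : E2) : ℝ := fderiv ℝ u x (ee i)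

/-- The equation `div [Df(∇u)] = 0`, i.e. `∑ i, ∂ᵢ[(∂f/∂pᵢ)(∇u(x))] = 0` on `ℝ²`. -/
def solves (f u : E2 → ℝ) : Prop :=
  ∀ x : E2, ∑ i : Fin 2, fderiv ℝ (fun y => fderiv ℝ f (gradient u y) (ee i)) x (ee i) = 0


/-!
The derivative `v = ∂ₑu` is a weak solution of the linearised equation `div (D²f(∇u) ∇v) = 0`.
Testing it with `η² ψ(v)` bounds the energy `∫ η² D²f(∇u)(∇v, ∇v) ψ'(v)` by
`4 ∫ D²f(∇u)(∇η, ∇η) ψ(v)² / ψ'(v)`. For `ψ = arsinh` the weight `ψ'` is `(1 + v²) ^ (-1/2)`, and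
`ψ² / ψ' = arsinh² v * √(1 + v²)` is at most of order `|v| log² (1 + |v|) + 1`, hence `O(1 + |∇u|)`,
which the decay of `D²f` compensates. So the energy is controlled by the Dirichlet integral of the
cut-off `η` alone, and in dimension at most two dilating a fixed bump keeps this integral bounded.
-/

open scoped Gradient RealInnerProductSpace

section ParametricIntegral

variable {X G : Type*} [TopologicalSpace X] [T2Space X] [MeasurableSpace X] [OpensMeasurableSpace X]
  [NormedAddCommGroup G] [NormedSpace ℝ G]

theorem hasDerivAt_integral_of_continuous_of_isCompact (μ : Measure X)
    [IsFiniteMeasureOnCompacts μ] {Φ Φ' : ℝ → X → G} {k : Set X} (hk : IsCompact k)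
    (hΦ : ∀ t, Continuous (Φ t)) (hΦ' : Continuous (Function.uncurry Φ'))
    (hderiv : ∀ t x, HasDerivAt (fun s => Φ s x) (Φ' t x) t)
    (hsupp : ∀ t, ∀ x ∉ k, Φ t x = 0) (t₀ : ℝ) :
    HasDerivAt (fun t => ∫ x, Φ t x ∂μ) (∫ x, Φ' t₀ x ∂μ) t₀ := by
  have hsupp' : ∀ t, ∀ x ∉ k, Φ' t x = 0 := fun t x hx =>
    (hderiv t x).unique (by simpa only [hsupp _ x hx] using hasDerivAt_const t (0 : G))
  have hint : ∀ t, Integrable (Φ t) μ := fun t =>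
    (hΦ t).integrable_of_hasCompactSupport (.intro hk (hsupp t))
  have hint' : Integrable (Φ' t₀) μ :=
    Continuous.integrable_of_hasCompactSupport (by fun_prop) (.intro hk (hsupp' t₀))
  obtain ⟨M, hM⟩ := ((isCompact_Icc (a := t₀ - 1) (b := t₀ + 1)).prod
    hk).exists_bound_of_continuousOn hΦ'.continuousOn
  refine (hasDerivAt_integral_of_dominated_loc_of_deriv_le (bound := k.indicator fun _ => M)
    (Icc_mem_nhds (sub_one_lt t₀) (lt_add_one t₀))
    (.of_forall fun t => (hint t).aestronglyMeasurable) (hint t₀) hint'.aestronglyMeasurable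
    (.of_forall fun x t ht => ?_)
    ((integrable_indicator_iff hk.measurableSet).2 (integrableOn_const hk.measure_ne_top))
    (.of_forall fun x t _ => hderiv t x)).2
  by_cases hx : x ∈ k
  · simpa only [Set.indicator_of_mem hx, Function.uncurry_apply_pair] using hM (t, x) ⟨ht, hx⟩
  · simp only [hsupp' t x hx, norm_zero, Set.indicator_of_notMem hx, le_refl]

end ParametricIntegral

section BilinearForm

variable {E : Type*} [NormedAddCommGroup E] [NormedSpace ℝ E] {B : E →L[ℝ] E →L[ℝ] ℝ}

theorem neg_two_mul_apply_le (hsymm : ∀ p q, B p q = B q p)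
    (hnonneg : ∀ q, 0 ≤ B q q) {d : ℝ} (hd : 0 < d) (p q : E) :
    -(2 * B p q) ≤ d * B p p + d⁻¹ * B q q := by
  have hexpand : d⁻¹ * B (d • p + q) (d • p + q) = d * B p p + 2 * B p q + d⁻¹ * B q q := by
    simp only [map_add, map_smul, add_apply, smul_apply, smul_eq_mul, hsymm q p]
    field_simp
    ring
  linarith [mul_nonneg (inv_nonneg.2 hd.le) (hnonneg (d • p + q))]

theorem apply_self_le_of_norm_le {c : ℝ} (hB : ‖B‖ ≤ c) (q : E) : B q q ≤ c * ‖q‖ ^ 2 :=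
  calc B q q ≤ ‖B‖ * ‖q‖ * ‖q‖ := (le_abs_self _).trans (B.le_opNorm₂ q q)
    _ = ‖B‖ * ‖q‖ ^ 2 := by ring
    _ ≤ c * ‖q‖ ^ 2 := by gcongr

end BilinearForm

section Gradient

variable {E : Type*} [NormedAddCommGroup E] [InnerProductSpace ℝ E] [CompleteSpace E]
  {u : E → ℝ}

theorem norm_gradient (u : E → ℝ) (x : E) : ‖∇ u x‖ = ‖fderiv ℝ u x‖ :=
  LinearIsometryEquiv.norm_map _ _

theorem abs_fderiv_apply_le_norm_gradient_mul (u : E → ℝ) (x e : E) :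
    |fderiv ℝ u x e| ≤ ‖∇ u x‖ * ‖e‖ :=
  inner_gradient_left (𝕜 := ℝ) (f := u) (x := x) (y := e) ▸ abs_real_inner_le_norm _ _

theorem contDiff_gradient {m n : WithTop ℕ∞} (hu : ContDiff ℝ n u) (hmn : m + 1 ≤ n) :
    ContDiff ℝ m (∇ u) :=
  (InnerProductSpace.toDual ℝ E).symm.contDiff.comp (hu.fderiv_right hmn)

theorem continuous_gradient (hu : ContDiff ℝ 1 u) : Continuous (∇ u) :=
  (contDiff_gradient (m := 0) hu (by norm_num)).continuous

theorem hasCompactSupport_gradient (hu : HasCompactSupport u) : HasCompactSupport (∇ u) :=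
  (hu.fderiv ℝ).comp_left (map_zero (InnerProductSpace.toDual ℝ E).symm)

theorem inner_fderiv_gradient_apply (hu : ContDiff ℝ 2 u) (x v w : E) :
    ⟪fderiv ℝ (∇ u) x v, w⟫ = fderiv ℝ (fderiv ℝ u) x v w := by
  have hgrad : DifferentiableAt ℝ (∇ u) x :=
    (contDiff_gradient hu one_add_one_eq_two.le).differentiable one_ne_zero x
  have hfderiv : DifferentiableAt ℝ (fderiv ℝ u) x :=
    (hu.fderiv_right one_add_one_eq_two.le).differentiable one_ne_zero x
  calc ⟪fderiv ℝ (∇ u) x v, w⟫ = fderiv ℝ (fun y => ⟪∇ u y, w⟫) x v := by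
        rw [fderiv_inner_apply ℝ hgrad (differentiableAt_const w)]
        simp
    _ = fderiv ℝ (fderiv ℝ u) x v w := by
        simp [inner_gradient_left, fderiv_clm_apply hfderiv (differentiableAt_const w)]

theorem fderiv_gradient_apply (hu : ContDiff ℝ 2 u) (x e : E) :
    fderiv ℝ (∇ u) x e = ∇ (fun y => fderiv ℝ u y e) x := by
  have hfderiv : DifferentiableAt ℝ (fderiv ℝ u) x :=
    (hu.fderiv_right one_add_one_eq_two.le).differentiable one_ne_zero x
  refine ext_inner_right ℝ fun w => ?_
  rw [inner_fderiv_gradient_apply hu, (hu.contDiffAt.isSymmSndFDerivAt (by simp)).eq,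
    inner_gradient_left, fderiv_clm_apply hfderiv (differentiableAt_const e)]
  simp

theorem gradient_sq_mul_comp {η v : E → ℝ} {ψ : ℝ → ℝ} {x : E}
    (hη : DifferentiableAt ℝ η x) (hv : DifferentiableAt ℝ v x)
    (hψ : DifferentiableAt ℝ ψ (v x)) :
    ∇ (fun y => η y ^ 2 * ψ (v y)) x =
      (2 * η x * ψ (v x)) • ∇ η x + (η x ^ 2 * deriv ψ (v x)) • ∇ v x := by
  have hderiv := (hη.hasFDerivAt.pow 2).mul (hψ.hasDerivAt.comp_hasFDerivAt x hv.hasFDerivAt)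
  refine (hasGradientAt_iff_hasFDerivAt.2 (hderiv.congr_fderiv ?_)).gradient
  ext w
  simp
  ring

theorem apply_gradient_sq_mul_le {B : E →L[ℝ] E →L[ℝ] ℝ} (hsymm : ∀ p q, B p q = B q p)
    (hnonneg : ∀ q, 0 ≤ B q q) {η v : E → ℝ} {ψ : ℝ → ℝ} {x : E} (hη : DifferentiableAt ℝ η x)
    (hv : DifferentiableAt ℝ v x) (hψ : DifferentiableAt ℝ ψ (v x)) (hψ' : 0 < deriv ψ (v x)) :
    η x ^ 2 * (B (∇ v x) (∇ v x) * deriv ψ (v x)) ≤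
      2 * B (∇ v x) (∇ (fun y => η y ^ 2 * ψ (v y)) x) +
        4 * (B (∇ η x) (∇ η x) * (ψ (v x) ^ 2 / deriv ψ (v x))) := by
  have hyoung := neg_two_mul_apply_le hsymm hnonneg hψ' (η x • ∇ v x) ((2 * ψ (v x)) • ∇ η x)
  rw [gradient_sq_mul_comp hη hv hψ]
  simp only [map_add, map_smul, smul_apply, smul_eq_mul] at hyoung ⊢
  rw [div_eq_mul_inv]
  linarith

end Gradient

section Divergence

variable {E : Type*} [NormedAddCommGroup E] [InnerProductSpace ℝ E]

/-- The divergence of a vector field, as the trace of its derivative. -/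
def divergence (F : E → E) (x : E) : ℝ := LinearMap.trace ℝ E (fderiv ℝ F x)

theorem divergence_eq_sum_fderiv_inner {ι : Type*} [Fintype ι] (b : OrthonormalBasis ι ℝ E)
    {F : E → E} {x : E} (hF : DifferentiableAt ℝ F x) :
    divergence F x = ∑ i, fderiv ℝ (fun y => ⟪b i, F y⟫) x (b i) := by
  simp [divergence, LinearMap.trace_eq_sum_inner _ b,
    fderiv_inner_apply ℝ (differentiableAt_const _) hF]

theorem divergence_comp_add_right (F : E → E) (a x : E) :
    divergence (fun y => F (y + a)) x = divergence F (x + a) := by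
  rw [divergence, fderiv_comp_add_right, divergence]

variable [FiniteDimensional ℝ E] [MeasurableSpace E] [BorelSpace E] (μ : Measure E)
  [μ.IsAddHaarMeasure] {F : E → E} {φ : E → ℝ}

theorem integral_inner_gradient_eq_neg_integral_divergence_mul (hF : ContDiff ℝ 1 F)
    (hφ : ContDiff ℝ 1 φ) (hφc : HasCompactSupport φ) :
    ∫ x, ⟪F x, ∇ φ x⟫ ∂μ = -∫ x, divergence F x * φ x ∂μ := by
  let b := stdOrthonormalBasis ℝ E
  have hFb : ∀ i, ContDiff ℝ 1 fun x => ⟪b i, F x⟫ := fun i => contDiff_const.inner ℝ hF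
  have hdFb : ∀ i, Continuous fun x => fderiv ℝ (fun y => ⟪b i, F y⟫) x (b i) := fun i =>
    ((hFb i).continuous_fderiv one_ne_zero).clm_apply continuous_const
  have hdφ : ∀ i, Continuous fun x => fderiv ℝ φ x (b i) := fun i =>
    (hφ.continuous_fderiv one_ne_zero).clm_apply continuous_const
  have hinner : ∀ x, ⟪F x, ∇ φ x⟫ = ∑ i, ⟪b i, F x⟫ * fderiv ℝ φ x (b i) := fun x => by
    rw [← b.sum_inner_mul_inner]
    simp only [inner_gradient_right, conj_trivial, real_inner_comm (b _)]
  have hint : ∀ i, Integrable (fun x => ⟪b i, F x⟫ * fderiv ℝ φ x (b i)) μ := fun i =>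
    ((hFb i).continuous.mul (hdφ i)).integrable_of_hasCompactSupport
      (hφc.fderiv_apply ℝ (b i)).mul_left
  have hint' : ∀ i, Integrable (fun x => fderiv ℝ (fun y => ⟪b i, F y⟫) x (b i) * φ x) μ :=
    fun i => ((hdFb i).mul hφ.continuous).integrable_of_hasCompactSupport hφc.mul_left
  calc ∫ x, ⟪F x, ∇ φ x⟫ ∂μ = ∫ x, ∑ i, ⟪b i, F x⟫ * fderiv ℝ φ x (b i) ∂μ := by
        simp only [hinner]
    _ = ∑ i, ∫ x, ⟪b i, F x⟫ * fderiv ℝ φ x (b i) ∂μ := integral_finsetSum _ fun i _ => hint i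
    _ = ∑ i, -∫ x, fderiv ℝ (fun y => ⟪b i, F y⟫) x (b i) * φ x ∂μ :=
        Finset.sum_congr rfl fun i _ => integral_mul_fderiv_eq_neg_fderiv_mul_of_integrable
          (hint' i) (hint i)
          (((hFb i).continuous.mul hφ.continuous).integrable_of_hasCompactSupport hφc.mul_left)
          (fun x _ => (hFb i).differentiable one_ne_zero x)
          (fun x _ => hφ.differentiable one_ne_zero x)
    _ = -∫ x, divergence F x * φ x ∂μ := by
        rw [Finset.sum_neg_distrib, ← integral_finsetSum _ fun i _ => hint' i]
        simp only [← Finset.sum_mul,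
          divergence_eq_sum_fderiv_inner b (hF.differentiable one_ne_zero _)]

-- The translates of `F` are divergence-free too, so one may differentiate under the integral in
-- the direction `e`; this way `F` need not be `C²`.
theorem integral_inner_fderiv_apply_gradient_eq_zero (hF : ContDiff ℝ 1 F)
    (hdiv : ∀ x, divergence F x = 0) (hφ : ContDiff ℝ 1 φ) (hφc : HasCompactSupport φ) (e : E) :
    ∫ x, ⟪fderiv ℝ F x e, ∇ φ x⟫ ∂μ = 0 := by
  have hzero : ∀ t : ℝ, ∫ x, ⟪F (x + t • e), ∇ φ x⟫ ∂μ = 0 := fun t => by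
    rw [integral_inner_gradient_eq_neg_integral_divergence_mul μ
      (F := fun x => F (x + t • e)) (by fun_prop) hφ hφc]
    simp only [divergence_comp_add_right, hdiv, zero_mul, integral_zero, neg_zero]
  have hgrad := continuous_gradient hφ
  have hF' := hF.continuous_fderiv one_ne_zero
  have hderiv := hasDerivAt_integral_of_continuous_of_isCompact μ
    (Φ := fun t x => ⟪F (x + t • e), ∇ φ x⟫) (Φ' := fun t x => ⟪fderiv ℝ F (x + t • e) e, ∇ φ x⟫)
    (hasCompactSupport_gradient hφc).isCompact (by fun_prop) (by fun_prop)
    (fun t x => by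
      have hline : HasDerivAt (fun s : ℝ => x + s • e) e t := by
        simpa using ((hasDerivAt_id t).smul_const e).const_add x
      simpa using ((hF.differentiable one_ne_zero _).hasFDerivAt.comp_hasDerivAt t hline).inner ℝ
        (hasDerivAt_const t (∇ φ x)))
    (fun t x hx => by rw [image_eq_zero_of_notMem_tsupport hx, inner_zero_right]) 0
  simp only [hzero, zero_smul, add_zero] at hderiv
  exact hderiv.unique (hasDerivAt_const _ _)

end Divergence

section WeakSolution

variable {E : Type*} [NormedAddCommGroup E] [InnerProductSpace ℝ E] [MeasurableSpace E]

/-- `v` is a weak solution of the linear equation `div (A ∇v) = 0`, where the coefficient matrix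
`A x` is encoded as a bilinear form and the test functions are of class `C¹` with compact
support. -/
def IsWeakSolution [CompleteSpace E] (μ : Measure E) (A : E → E →L[ℝ] E →L[ℝ] ℝ) (v : E → ℝ) :
    Prop :=
  ∀ φ : E → ℝ, ContDiff ℝ 1 φ → HasCompactSupport φ → ∫ x, A x (∇ v x) (∇ φ x) ∂μ = 0

theorem isWeakSolution_fderiv_apply [FiniteDimensional ℝ E] [BorelSpace E] (μ : Measure E)
    [μ.IsAddHaarMeasure] {f u : E → ℝ} (hf : ContDiff ℝ 2 f) (hu : ContDiff ℝ 2 u)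
    (hdiv : ∀ x, divergence (fun y => ∇ f (∇ u y)) x = 0) (e : E) :
    IsWeakSolution μ (fun x => fderiv ℝ (fderiv ℝ f) (∇ u x)) fun x => fderiv ℝ u x e := by
  intro φ hφ hφc
  have hgf : ContDiff ℝ 1 (∇ f) := contDiff_gradient hf one_add_one_eq_two.le
  have hgu : ContDiff ℝ 1 (∇ u) := contDiff_gradient hu one_add_one_eq_two.le
  have hchain : ∀ x, fderiv ℝ (fun y => ∇ f (∇ u y)) x e =
      fderiv ℝ (∇ f) (∇ u x) (∇ (fun y => fderiv ℝ u y e) x) := fun x => by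
    rw [← fderiv_gradient_apply hu]
    exact DFunLike.congr_fun (fderiv_comp x (hgf.differentiable one_ne_zero _)
      (hgu.differentiable one_ne_zero x)) e
  rw [← integral_inner_fderiv_apply_gradient_eq_zero μ (hgf.comp hgu) hdiv hφ hφc e]
  simp only [← inner_fderiv_gradient_apply hf, ← hchain, Function.comp_def]

-- The test function is `η² ψ(v)`; Young's inequality absorbs the mixed term.
theorem IsWeakSolution.caccioppoli [CompleteSpace E] [BorelSpace E] {μ : Measure E}
    [IsFiniteMeasureOnCompacts μ] {A : E → E →L[ℝ] E →L[ℝ] ℝ} {v : E → ℝ}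
    (hAv : IsWeakSolution μ A v) (hA : Continuous A) (hsymm : ∀ x p q, A x p q = A x q p)
    (hnonneg : ∀ x q, 0 ≤ A x q q) (hv : ContDiff ℝ 1 v) {ψ : ℝ → ℝ} (hψ : ContDiff ℝ 1 ψ)
    (hψ' : ∀ t, 0 < deriv ψ t) {η : E → ℝ} (hη : ContDiff ℝ 1 η) (hηc : HasCompactSupport η) :
    ∫ x, η x ^ 2 * (A x (∇ v x) (∇ v x) * deriv ψ (v x)) ∂μ ≤
      4 * ∫ x, A x (∇ η x) (∇ η x) * (ψ (v x) ^ 2 / deriv ψ (v x)) ∂μ := by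
  have hη2c : HasCompactSupport fun x => η x ^ 2 := hηc.comp_left (g := (· ^ 2)) (by simp)
  have hφ : ContDiff ℝ 1 fun x => η x ^ 2 * ψ (v x) := (hη.pow 2).mul (hψ.comp hv)
  have hφc : HasCompactSupport fun x => η x ^ 2 * ψ (v x) := hη2c.mul_right
  have hψv := hψ.continuous.comp hv.continuous
  have hψ'v := (hψ.continuous_deriv_one).comp hv.continuous
  have hform : ∀ {P Q : E → E}, Continuous P → Continuous Q → Continuous fun x => A x (P x) (Q x) :=
    fun hP hQ => (hA.clm_apply hP).clm_apply hQ
  have hint_test : Integrable (fun x => A x (∇ v x) (∇ (fun y => η y ^ 2 * ψ (v y)) x)) μ :=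
    (hform (continuous_gradient hv) (continuous_gradient hφ)).integrable_of_hasCompactSupport
      ((hasCompactSupport_gradient hφc).mono fun x hx h => hx (by simp [h]))
  have hint_left : Integrable (fun x => η x ^ 2 * (A x (∇ v x) (∇ v x) * deriv ψ (v x))) μ :=
    ((hη.continuous.pow 2).mul ((hform (continuous_gradient hv) (continuous_gradient hv)).mul
      hψ'v)).integrable_of_hasCompactSupport hη2c.mul_right
  have hint_right :
      Integrable (fun x => A x (∇ η x) (∇ η x) * (ψ (v x) ^ 2 / deriv ψ (v x))) μ :=
    ((hform (continuous_gradient hη) (continuous_gradient hη)).mul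
      ((hψv.pow 2).div hψ'v fun x => (hψ' _).ne')).integrable_of_hasCompactSupport
      ((hasCompactSupport_gradient hηc).mono fun x hx h => hx (by simp [h]))
  calc ∫ x, η x ^ 2 * (A x (∇ v x) (∇ v x) * deriv ψ (v x)) ∂μ
      ≤ ∫ x, (2 * A x (∇ v x) (∇ (fun y => η y ^ 2 * ψ (v y)) x) +
          4 * (A x (∇ η x) (∇ η x) * (ψ (v x) ^ 2 / deriv ψ (v x)))) ∂μ :=
        integral_mono hint_left ((hint_test.const_mul 2).add (hint_right.const_mul 4)) fun x =>
          apply_gradient_sq_mul_le (hsymm x) (hnonneg x) (hη.differentiable one_ne_zero x)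
            (hv.differentiable one_ne_zero x) (hψ.differentiable one_ne_zero _) (hψ' _)
    _ = 4 * ∫ x, A x (∇ η x) (∇ η x) * (ψ (v x) ^ 2 / deriv ψ (v x)) ∂μ := by
        rw [integral_add (hint_test.const_mul 2) (hint_right.const_mul 4), integral_const_mul,
          integral_const_mul, hAv _ hφ hφc, mul_zero, zero_add]

end WeakSolution

section Cutoff

theorem lintegral_ofReal_le_of_integral_sq_cutoff_le {X : Type*} [PseudoMetricSpace X]
    [MeasurableSpace X] [OpensMeasurableSpace X] {μ : Measure X} [IsFiniteMeasureOnCompacts μ]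
    (x₀ : X) {g : X → ℝ} (hg : Continuous g) (hg0 : ∀ x, 0 ≤ g x) {C : ℝ}
    (hC : ∀ᶠ R in Filter.atTop, ∃ η : X → ℝ, Continuous η ∧ HasCompactSupport η ∧
      Set.EqOn η 1 (ball x₀ R) ∧ ∫ x, η x ^ 2 * g x ∂μ ≤ C) :
    ∫⁻ x, ENNReal.ofReal (g x) ∂μ ≤ ENNReal.ofReal C := by
  have hlim := (aecover_ball (μ := μ) (x := x₀) Filter.tendsto_id)
    |>.lintegral_tendsto_of_countably_generated hg.measurable.ennreal_ofReal.aemeasurable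
  refine le_of_tendsto hlim ?_
  filter_upwards [hC] with R ⟨η, hη, hηc, hη1, hηC⟩
  have hη2c : HasCompactSupport fun x => η x ^ 2 := hηc.comp_left (g := (· ^ 2)) (by simp)
  have hint : Integrable (fun x => η x ^ 2 * g x) μ :=
    ((hη.pow 2).mul hg).integrable_of_hasCompactSupport hη2c.mul_right
  calc ∫⁻ x in ball x₀ R, ENNReal.ofReal (g x) ∂μ
      = ∫⁻ x in ball x₀ R, ENNReal.ofReal (η x ^ 2 * g x) ∂μ :=
        setLIntegral_congr_fun measurableSet_ball fun x hx => by simp [hη1 hx]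
    _ ≤ ∫⁻ x, ENNReal.ofReal (η x ^ 2 * g x) ∂μ := setLIntegral_le_lintegral _ _
    _ = ENNReal.ofReal (∫ x, η x ^ 2 * g x ∂μ) :=
        (ofReal_integral_eq_lintegral_ofReal hint (.of_forall fun x =>
          mul_nonneg (sq_nonneg _) (hg0 x))).symm
    _ ≤ ENNReal.ofReal C := ENNReal.ofReal_le_ofReal hηC

variable {E : Type*} [NormedAddCommGroup E] [InnerProductSpace ℝ E] [FiniteDimensional ℝ E]
  [MeasurableSpace E] [BorelSpace E] (μ : Measure E) [μ.IsAddHaarMeasure]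

theorem integral_norm_gradient_comp_inv_smul_sq (χ : E → ℝ) {R : ℝ} (hR : 0 < R) :
    ∫ x, ‖∇ (fun y => χ (R⁻¹ • y)) x‖ ^ 2 ∂μ =
      R ^ Module.finrank ℝ E / R ^ 2 * ∫ x, ‖∇ χ x‖ ^ 2 ∂μ := by
  have hscale : ∀ x, ‖∇ (fun y => χ (R⁻¹ • y)) x‖ ^ 2 = (R ^ 2)⁻¹ * ‖∇ χ (R⁻¹ • x)‖ ^ 2 :=
    fun x => by
      rw [norm_gradient, norm_gradient, fderiv_comp_smul, norm_smul, mul_pow, norm_inv, inv_pow,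
        Real.norm_eq_abs, sq_abs]
  simp only [hscale, integral_const_mul]
  rw [Measure.integral_comp_inv_smul_of_nonneg μ (fun z => ‖∇ χ z‖ ^ 2) hR.le, smul_eq_mul]
  ring

theorem exists_cutoff_integral_norm_gradient_sq_le (hdim : Module.finrank ℝ E ≤ 2) :
    ∃ C : ℝ, ∀ R : ℝ, 1 ≤ R → ∃ η : E → ℝ, ContDiff ℝ 1 η ∧ HasCompactSupport η ∧
      Set.EqOn η 1 (ball 0 R) ∧ ∫ x, ‖∇ η x‖ ^ 2 ∂μ ≤ C := by
  let χ : ContDiffBump (0 : E) := ⟨1, 2, one_pos, one_lt_two⟩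
  refine ⟨∫ x, ‖∇ χ x‖ ^ 2 ∂μ, fun R hR => ?_⟩
  have hR0 : 0 < R := one_pos.trans_le hR
  refine ⟨fun x => χ (R⁻¹ • x), χ.contDiff.comp (contDiff_const_smul _),
    χ.hasCompactSupport.comp_smul (inv_ne_zero hR0.ne'), fun x hx => ?_, ?_⟩
  · refine χ.one_of_mem_closedBall (mem_closedBall_zero_iff.2 ?_)
    rw [norm_smul, norm_inv, Real.norm_of_nonneg hR0.le]
    exact inv_mul_le_one_of_le₀ (mem_ball_zero_iff.1 hx).le hR0.le
  · rw [integral_norm_gradient_comp_inv_smul_sq μ χ hR0]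
    exact mul_le_of_le_one_left (integral_nonneg fun x => sq_nonneg _)
      (div_le_one_of_le₀ (pow_le_pow_right₀ hR hdim) (sq_nonneg R))

variable {μ}

theorem IsWeakSolution.lintegral_energy_lt_top (hdim : Module.finrank ℝ E ≤ 2)
    {A : E → E →L[ℝ] E →L[ℝ] ℝ} {v : E → ℝ} (hAv : IsWeakSolution μ A v) (hA : Continuous A)
    (hsymm : ∀ x p q, A x p q = A x q p) (hnonneg : ∀ x q, 0 ≤ A x q q) (hv : ContDiff ℝ 1 v)
    {ψ : ℝ → ℝ} (hψ : ContDiff ℝ 1 ψ) (hψ' : ∀ t, 0 < deriv ψ t) {C : ℝ}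
    (hC : ∀ x q, A x q q * (ψ (v x) ^ 2 / deriv ψ (v x)) ≤ C * ‖q‖ ^ 2) :
    ∫⁻ x, ENNReal.ofReal (A x (∇ v x) (∇ v x) * deriv ψ (v x)) ∂μ < ⊤ := by
  obtain ⟨D, hD⟩ := exists_cutoff_integral_norm_gradient_sq_le μ hdim
  have hgrad := continuous_gradient hv
  have hcont : Continuous fun x => A x (∇ v x) (∇ v x) * deriv ψ (v x) :=
    ((hA.clm_apply hgrad).clm_apply hgrad).mul (hψ.continuous_deriv_one.comp hv.continuous)
  refine (lintegral_ofReal_le_of_integral_sq_cutoff_le 0 hcont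
    (fun x => mul_nonneg (hnonneg x _) (hψ' _).le) (C := 4 * (|C| * D)) ?_).trans_lt
    ENNReal.ofReal_lt_top
  filter_upwards [Filter.eventually_ge_atTop 1] with R hR
  obtain ⟨η, hη, hηc, hη1, hηD⟩ := hD R hR
  have hint : Integrable (fun x => ‖∇ η x‖ ^ 2) μ :=
    ((continuous_gradient hη).norm.pow 2).integrable_of_hasCompactSupport
      ((hasCompactSupport_gradient hηc).mono fun x hx h => hx (by simp [h]))
  refine ⟨η, hη.continuous, hηc, hη1, ?_⟩
  calc ∫ x, η x ^ 2 * (A x (∇ v x) (∇ v x) * deriv ψ (v x)) ∂μ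
      ≤ 4 * ∫ x, A x (∇ η x) (∇ η x) * (ψ (v x) ^ 2 / deriv ψ (v x)) ∂μ :=
        hAv.caccioppoli hA hsymm hnonneg hv hψ hψ' hη hηc
    _ ≤ 4 * ∫ x, |C| * ‖∇ η x‖ ^ 2 ∂μ := by
        gcongr 4 * ?_
        refine integral_mono_of_nonneg (.of_forall fun x => ?_) (hint.const_mul _)
          (.of_forall fun x => (hC x _).trans ?_)
        · exact mul_nonneg (hnonneg x _) (div_nonneg (sq_nonneg _) (hψ' _).le)
        · exact mul_le_mul_of_nonneg_right (le_abs_self C) (sq_nonneg _)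
    _ ≤ 4 * (|C| * D) := by
        rw [integral_const_mul]
        gcongr

end Cutoff

section Arsinh

theorem abs_arsinh (t : ℝ) : |arsinh t| = arsinh |t| := by
  rw [← arsinh_sinh |arsinh t|, ← abs_sinh, sinh_arsinh]

theorem sqrt_one_add_sq_le_one_add_abs (t : ℝ) : √(1 + t ^ 2) ≤ 1 + |t| :=
  Real.sqrt_le_iff.2 ⟨by positivity, by nlinarith [sq_abs t, abs_nonneg t]⟩

theorem abs_arsinh_le_two_mul_log (t : ℝ) : |arsinh t| ≤ 2 * log (1 + |t|) := by
  have hexp : |t| + √(1 + |t| ^ 2) ≤ (1 + |t|) ^ 2 := by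
    nlinarith [sqrt_one_add_sq_le_one_add_abs |t|, abs_abs t, abs_nonneg t]
  calc |arsinh t| = log (|t| + √(1 + |t| ^ 2)) := by rw [abs_arsinh, arsinh]
    _ ≤ log ((1 + |t|) ^ 2) := Real.log_le_log (by positivity) hexp
    _ = 2 * log (1 + |t|) := by rw [Real.log_pow, Nat.cast_ofNat]

theorem log_one_add_sq_le {s : ℝ} (hs : 0 ≤ s) : log (1 + s) ^ 2 ≤ s * log (1 + s) ^ 2 + 1 := by
  have hlog0 : 0 ≤ log (1 + s) := Real.log_nonneg (by linarith)
  rcases le_total 1 s with h1s | hs1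
  · linarith [le_mul_of_one_le_left (sq_nonneg (log (1 + s))) h1s]
  · have hlog1 : log (1 + s) ≤ 1 := by
      linarith [Real.log_le_sub_one_of_pos (show 0 < 1 + s by linarith)]
    linarith [pow_le_one₀ (n := 2) hlog0 hlog1, mul_nonneg hs (sq_nonneg (log (1 + s)))]

theorem arsinh_sq_mul_sqrt_le (t : ℝ) :
    arsinh t ^ 2 * √(1 + t ^ 2) ≤ 8 * (|t| * log (1 + |t|) ^ 2) + 4 :=
  calc arsinh t ^ 2 * √(1 + t ^ 2) = |arsinh t| ^ 2 * √(1 + t ^ 2) := by rw [sq_abs]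
    _ ≤ (2 * log (1 + |t|)) ^ 2 * (1 + |t|) := by
        gcongr
        · exact abs_arsinh_le_two_mul_log t
        · exact sqrt_one_add_sq_le_one_add_abs t
    _ = 4 * (|t| * log (1 + |t|) ^ 2) + 4 * log (1 + |t|) ^ 2 := by ring
    _ ≤ 8 * (|t| * log (1 + |t|) ^ 2) + 4 := by linarith [log_one_add_sq_le (abs_nonneg t)]

theorem deriv_arsinh_eq_rpow (t : ℝ) : deriv arsinh t = (1 + t ^ 2) ^ (-(1 : ℝ) / 2) := by
  rw [(hasDerivAt_arsinh t).deriv, neg_div, Real.rpow_neg (by positivity), Real.sqrt_eq_rpow]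

theorem apply_self_mul_arsinh_sq_div_deriv_le {E : Type*} [NormedAddCommGroup E]
    [NormedSpace ℝ E] {B : E →L[ℝ] E →L[ℝ] ℝ} {Lam M K t : ℝ} (hM : 0 ≤ M)
    (hB : ‖B‖ ≤ Lam / (1 + M)) (ht : |t| * log (1 + |t|) ^ 2 ≤ K * (1 + M)) (q : E) :
    B q q * (arsinh t ^ 2 / deriv arsinh t) ≤ Lam * (8 * K + 4) * ‖q‖ ^ 2 := by
  have hweight : arsinh t ^ 2 * √(1 + t ^ 2) ≤ (8 * K + 4) * (1 + M) := by
    linarith [arsinh_sq_mul_sqrt_le t]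
  have hcoef : 0 ≤ Lam / (1 + M) := (norm_nonneg B).trans hB
  calc B q q * (arsinh t ^ 2 / deriv arsinh t) = B q q * (arsinh t ^ 2 * √(1 + t ^ 2)) := by
        rw [(hasDerivAt_arsinh t).deriv, div_inv_eq_mul]
    _ ≤ Lam / (1 + M) * ‖q‖ ^ 2 * ((8 * K + 4) * (1 + M)) :=
        mul_le_mul (apply_self_le_of_norm_le hB q) hweight (by positivity) (by positivity)
    _ = Lam * (8 * K + 4) * ‖q‖ ^ 2 := by field_simp

end Arsinh

theorem statement12_general {E : Type*} [NormedAddCommGroup E] [InnerProductSpace ℝ E]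
    [FiniteDimensional ℝ E] [MeasurableSpace E] [BorelSpace E] (μ : Measure E)
    [μ.IsAddHaarMeasure] (hdim : Module.finrank ℝ E ≤ 2) {f u : E → ℝ} (hf : ContDiff ℝ 2 f)
    (hnonneg : ∀ p q, 0 ≤ fderiv ℝ (fderiv ℝ f) p q q) {Lam : ℝ}
    (hgrow : ∀ p, ‖fderiv ℝ (fderiv ℝ f) p‖ ≤ Lam / (1 + ‖p‖)) (hu : ContDiff ℝ 2 u)
    (hdiv : ∀ x, divergence (fun y => ∇ f (∇ u y)) x = 0) (e : E) {K : ℝ}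
    (hbd : ∀ x, |fderiv ℝ u x e| * log (1 + |fderiv ℝ u x e|) ^ 2 ≤ K * (1 + ‖∇ u x‖)) :
    ∫⁻ x, ENNReal.ofReal (fderiv ℝ (fderiv ℝ f) (∇ u x) (∇ (fun y => fderiv ℝ u y e) x)
      (∇ (fun y => fderiv ℝ u y e) x) * (1 + fderiv ℝ u x e ^ 2) ^ (-(1 : ℝ) / 2)) ∂μ < ⊤ := by
  have hA : Continuous fun x => fderiv ℝ (fderiv ℝ f) (∇ u x) :=
    ((hf.fderiv_right one_add_one_eq_two.le).continuous_fderiv one_ne_zero).comp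
      (continuous_gradient (hu.of_le one_le_two))
  have hv : ContDiff ℝ 1 fun x => fderiv ℝ u x e :=
    (hu.fderiv_right one_add_one_eq_two.le).clm_apply contDiff_const
  simp only [← deriv_arsinh_eq_rpow]
  exact (isWeakSolution_fderiv_apply μ hf hu hdiv e).lintegral_energy_lt_top hdim hA
    (fun x => hf.contDiffAt.isSymmSndFDerivAt (by simp)) (fun x => hnonneg (∇ u x)) hv
    contDiff_arsinh (fun t => by rw [deriv_arsinh_eq_rpow]; positivity)
    fun x => apply_self_mul_arsinh_sq_div_deriv_le (norm_nonneg (∇ u x)) (hgrow _) (hbd x)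

theorem norm_iteratedFDeriv_two {E F : Type*} [NormedAddCommGroup E] [NormedSpace ℝ E]
    [NormedAddCommGroup F] [NormedSpace ℝ F] (f : E → F) (p : E) :
    ‖iteratedFDeriv ℝ 2 f p‖ = ‖fderiv ℝ (fderiv ℝ f) p‖ := by
  rw [← norm_iteratedFDeriv_fderiv, norm_iteratedFDeriv_one]

section Plane

variable {f u : E2 → ℝ}

theorem Hess_eq_fderiv_fderiv (f : E2 → ℝ) (p q : E2) :
    Hess f p q = fderiv ℝ (fderiv ℝ f) p q q := by
  simp [Hess, iteratedFDeriv_two_apply]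

theorem Hess_nonneg {p : E2} (hpos : ∀ q ≠ 0, 0 < Hess f p q) (q : E2) : 0 ≤ Hess f p q := by
  rcases eq_or_ne q 0 with rfl | hq
  · simp [Hess_eq_fderiv_fderiv]
  · exact (hpos q hq).le

theorem abs_pd_le_norm_gradient (u : E2 → ℝ) (i : Fin 2) (x : E2) : |pd u i x| ≤ ‖∇ u x‖ := by
  simpa [pd, ee] using abs_fderiv_apply_le_norm_gradient_mul u x (ee i)

theorem solves_iff_divergence_eq_zero (hf : ContDiff ℝ 2 f) (hu : ContDiff ℝ 2 u) :
    solves f u ↔ ∀ x, divergence (fun y => ∇ f (∇ u y)) x = 0 := by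
  have hflux : ContDiff ℝ 1 fun y => ∇ f (∇ u y) :=
    (contDiff_gradient hf one_add_one_eq_two.le).comp (contDiff_gradient hu one_add_one_eq_two.le)
  refine forall_congr' fun x => ?_
  rw [divergence_eq_sum_fderiv_inner (EuclideanSpace.basisFun (Fin 2) ℝ)
    (hflux.differentiable one_ne_zero x)]
  simp only [inner_gradient_right, conj_trivial, EuclideanSpace.basisFun_apply, ee]

end Plane

theorem statement12 (f u : E2 → ℝ)
    (hf : ContDiff ℝ 2 f)
    (hpos : ∀ p q : E2, q ≠ 0 → 0 < Hess f p q)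
    (Lam : ℝ) (hLam : 0 < Lam)
    (hgrow : ∀ p : E2, ‖iteratedFDeriv ℝ 2 f p‖ ≤ Lam / (1 + ‖p‖))
    (hu : ContDiff ℝ 2 u) (heq : solves f u)
    (K : ℝ) (hK : 0 < K)
    (hbd : ∀ x : E2, |pd u 0 x| * (Real.log (1 + |pd u 0 x|)) ^ 2 ≤ K * (|pd u 1 x| + 1)) :
    ∫⁻ x : E2, ENNReal.ofReal
      (Hess f (gradient u x) (gradient (pd u 0) x) * (1 + (pd u 0 x) ^ 2) ^ (-(1:ℝ)/2)) < ⊤ := by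
  simp only [Hess_eq_fderiv_fderiv]
  exact statement12_general volume finrank_euclideanSpace_fin.le hf
    (fun p q => Hess_eq_fderiv_fderiv f p q ▸ Hess_nonneg (hpos p) q)
    (fun p => norm_iteratedFDeriv_two f p ▸ hgrow p) hu
    ((solves_iff_divergence_eq_zero hf hu).1 heq) (ee 0)
    fun x => (hbd x).trans (by grw [abs_pd_le_norm_gradient, add_comm])
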